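/- (Corollary 1 of the paper.) Let λ0, λ1 ∈ ℝ with λ0 > 0, λ1 > 0, λ0 + λ1 = 1 and λ0 ≠ λ1, and ρ := Matrix.diagonal ![ (λ0 : ℂ), (λ1 : ℂ) ]. Let m ∈ ℕ and let A : Fin m → Matrix (Fin 2) (Fin 2) ℂ be a family of Hermitian matrices with trace 0 (the derivatives of the encoded state with respect to the m parameters), with SLDs L i relative to ρ. Then the quantum Cramér–Rao bound achievability condition ∀ i j, Tr[ρ * (L i * L j − L j * L i)] = 0 holds if and only if ∀ i j, ((A i 0 1) * star (A j 0 1)).im = 0, i.e., the off-diagonal elements ⟨e0|A i|e1⟩ are pairwise real multiples of one another. -/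

import Mathlib

open Matrix

/-- The symmetric logarithmic derivative of `A` relative to `ρ = diagonal ![λ0, λ1]`,
defined entrywise by `L μ ν = 2 ⬝ A μ ν / (λμ + λν)`. -/
noncomputable def sld (l0 l1 : ℝ) (A : Matrix (Fin 2) (Fin 2) ℂ) : Matrix (Fin 2) (Fin 2) ℂ :=
  Matrix.of fun μ ν => 2 * A μ ν / ((![l0, l1] μ + ![l0, l1] ν : ℝ) : ℂ)

/-!
The entry `M i j * N j i` contributes to `Tr[ρ (M N - N M)]` with weight `λi - λj`, so only the
off-diagonal entries of the SLDs matter. For qubits these are the off-diagonal entries of the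
derivatives up to one common real factor, and for Hermitian matrices the two surviving terms are
a complex number minus its conjugate.
-/

theorem trace_diagonal_mul_commutator {n R : Type*} [Fintype n] [DecidableEq n] [CommRing R]
    (d : n → R) (M N : Matrix n n R) :
    trace (diagonal d * (M * N - N * M)) = ∑ i, ∑ j, (d i - d j) * (M i j * N j i) := by
  have trace_mul_mul (P Q : Matrix n n R) :
      trace (diagonal d * (P * Q)) = ∑ i, ∑ j, d i * (P i j * Q j i) := by
    simp only [trace, diag_apply, diagonal_mul]
    simp only [mul_apply, Finset.mul_sum]
  have swapped : trace (diagonal d * (N * M)) = ∑ i, ∑ j, d j * (M i j * N j i) := by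
    rw [trace_mul_mul, Finset.sum_comm]
    simp only [mul_comm (N _ _)]
  rw [mul_sub, trace_sub, trace_mul_mul, swapped]
  simp only [sub_mul, Finset.sum_sub_distrib]

theorem trace_diagonal_mul_commutator_fin_two_of_isHermitian (l0 l1 : ℝ)
    {M N : Matrix (Fin 2) (Fin 2) ℂ} (hM : M.IsHermitian) (hN : N.IsHermitian) :
    trace (diagonal ![(l0 : ℂ), (l1 : ℂ)] * (M * N - N * M)) =
      ((2 * (l0 - l1) * (M 0 1 * star (N 0 1)).im : ℝ) : ℂ) * Complex.I := by
  have sub_star : M 0 1 * star (N 0 1) - star (M 0 1) * N 0 1 =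
      ((2 * (M 0 1 * star (N 0 1)).im : ℝ) : ℂ) * Complex.I := by
    simpa using Complex.sub_conj (M 0 1 * star (N 0 1))
  calc trace (diagonal ![(l0 : ℂ), (l1 : ℂ)] * (M * N - N * M))
      = (l0 - l1) * (M 0 1 * N 1 0 - M 1 0 * N 0 1) := by
        rw [trace_diagonal_mul_commutator]
        simp only [Fin.sum_univ_two, cons_val_zero, cons_val_one]
        ring
    _ = (l0 - l1) * (M 0 1 * star (N 0 1) - star (M 0 1) * N 0 1) := by
        rw [hM.apply, hN.apply]
    _ = ((2 * (l0 - l1) * (M 0 1 * star (N 0 1)).im : ℝ) : ℂ) * Complex.I := by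
        rw [sub_star]
        push_cast
        ring

section SLD

variable (l0 l1 : ℝ) (A B : Matrix (Fin 2) (Fin 2) ℂ)

theorem sld_zero_one :
    sld l0 l1 A 0 1 = ((2 / (l0 + l1) : ℝ) : ℂ) * A 0 1 := by
  simp only [sld, of_apply, cons_val_zero, cons_val_one]
  push_cast
  ring

theorem im_sld_mul_star_sld :
    (sld l0 l1 A 0 1 * star (sld l0 l1 B 0 1)).im =
      (2 / (l0 + l1)) ^ 2 * (A 0 1 * star (B 0 1)).im := by
  rw [sld_zero_one, sld_zero_one, star_mul', Complex.star_def, Complex.conj_ofReal,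
    mul_mul_mul_comm, ← Complex.ofReal_mul, Complex.im_ofReal_mul, ← pow_two]

variable {l0 l1 A B}

theorem isHermitian_sld (hA : A.IsHermitian) : (sld l0 l1 A).IsHermitian := by
  refine IsHermitian.ext fun μ ν => ?_
  simp only [sld, of_apply, star_div₀, star_mul', hA.apply, Complex.star_def, Complex.conj_ofReal,
    map_ofNat, add_comm (![l0, l1] ν)]

theorem trace_diagonal_mul_sld_commutator_eq_zero_iff (hsum : l0 + l1 ≠ 0) (hne : l0 ≠ l1)
    (hA : A.IsHermitian) (hB : B.IsHermitian) :
    trace (diagonal ![(l0 : ℂ), (l1 : ℂ)] *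
        (sld l0 l1 A * sld l0 l1 B - sld l0 l1 B * sld l0 l1 A)) = 0 ↔
      (A 0 1 * star (B 0 1)).im = 0 := by
  have weight_ne_zero : 2 * (l0 - l1) ≠ 0 := mul_ne_zero two_ne_zero (sub_ne_zero.mpr hne)
  have scale_ne_zero : (2 / (l0 + l1)) ^ 2 ≠ 0 := pow_ne_zero 2 (div_ne_zero two_ne_zero hsum)
  rw [trace_diagonal_mul_commutator_fin_two_of_isHermitian l0 l1 (isHermitian_sld hA)
      (isHermitian_sld hB), mul_eq_zero_iff_right Complex.I_ne_zero,
    Complex.ofReal_eq_zero, mul_eq_zero_iff_left weight_ne_zero, im_sld_mul_star_sld,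
    mul_eq_zero_iff_left scale_ne_zero]

end SLD

theorem stmt_11_general {ι : Type*} {l0 l1 : ℝ} (hsum : l0 + l1 ≠ 0) (hne : l0 ≠ l1)
    {A : ι → Matrix (Fin 2) (Fin 2) ℂ} (hA : ∀ i, (A i).IsHermitian) :
    (∀ i j, trace (diagonal ![(l0 : ℂ), (l1 : ℂ)] *
        (sld l0 l1 (A i) * sld l0 l1 (A j) - sld l0 l1 (A j) * sld l0 l1 (A i))) = 0) ↔
      ∀ i j, (A i 0 1 * star (A j 0 1)).im = 0 :=
  forall₂_congr fun i j => trace_diagonal_mul_sld_commutator_eq_zero_iff hsum hne (hA i) (hA j)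

/-- Corollary 1 of the paper: the multiparameter QCRB achievability condition for qubit
probes holds iff the off-diagonal elements of the parameter-derivatives are pairwise real
multiples of one another. -/
theorem stmt_11 (l0 l1 : ℝ) (hl0 : 0 < l0) (hl1 : 0 < l1) (hsum : l0 + l1 = 1)
    (hne : l0 ≠ l1)
    (ρ : Matrix (Fin 2) (Fin 2) ℂ) (hρ : ρ = Matrix.diagonal ![(l0 : ℂ), (l1 : ℂ)])
    (m : ℕ) (A : Fin m → Matrix (Fin 2) (Fin 2) ℂ)
    (hA : ∀ i, (A i).IsHermitian) (hAtr : ∀ i, (A i).trace = 0)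
    (L : Fin m → Matrix (Fin 2) (Fin 2) ℂ) (hL : ∀ i, L i = sld l0 l1 (A i)) :
    (∀ i j, Matrix.trace (ρ * (L i * L j - L j * L i)) = 0) ↔
      (∀ i j, (A i 0 1 * star (A j 0 1)).im = 0) := by
  simpa only [hρ, hL] using stmt_11_general (hsum.trans_ne one_ne_zero) hne hA
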